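/- arXiv:2410.04532 — 4 statements merged into one kernel-verified Lean document; each statement's English description precedes it below -/
import Mathlib

section
/- Let d ≥ 1 be an integer and let f : ℝ^d → ℝ be a smooth bounded function. Let 1 ≤ i ≤ m be integers with i < m − d/2, and set θ = i/(m − d/2). Let I_{−1} = [0,1] and I_j = [2^{j}, 2^{j+1}] for j ≥ 0, and let φ : ℝ^d → [0,∞) be a weight for which there exist values φ_j (j ≥ −1) and a constant C ≥ 1 with φ(x) ∈ [φ_j/C, Cφ_j] whenever |x| ∈ I_j, and φ_{−1} = φ_0 = 1. Assume ‖ φ^m |∇^m f| ‖_{L²(ℝ^d)} < ∞. Then there is a constant C′ depending only on d, i, m, C (and not on f or φ) such that for every x ∈ ℝ^d with φ(x) > 0: |∇^i f(x)| ≤ C′ ( ‖f‖_{L^∞}^{1−θ} ‖ φ^m |∇^m f| ‖_{L²}^{θ} φ(x)^{−mθ} + ‖f‖_{L^∞} ⟨x⟩^{−i} ), where ⟨x⟩ = (1+|x|²)^{1/2}. -/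
open MeasureTheory
open scoped ENNReal

noncomputable section


theorem symm_iter {E : Type*} [NormedAddCommGroup E] [NormedSpace ℝ E] (f : E → ℝ)
    (hf : ContDiff ℝ (⊤ : ℕ∞) f) : ∀ (n : ℕ) (x : E) (σ : Equiv.Perm (Fin n)) (v : Fin n → E),
    iteratedFDeriv ℝ n f x (v ∘ σ) = iteratedFDeriv ℝ n f x v := by
  have hdiff : ∀ n x, DifferentiableAt ℝ (iteratedFDeriv ℝ n f) x := fun n x =>
    (hf.differentiable_iteratedFDeriv (m := n) (by exact_mod_cast WithTop.coe_lt_top _)) x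
  have hcd : ∀ n, ContDiff ℝ 2 (iteratedFDeriv ℝ n f) := fun n =>
    (show ContDiff ℝ ((2 + n : ℕ) : WithTop ℕ∞) f from
      contDiff_infty.1 hf _).iteratedFDeriv_right (m := 2) (i := n) (by push_cast; exact le_rfl)
  have key : ∀ (n : ℕ) (x : E) (k : Fin n) (v : Fin (n + 1) → E),
      iteratedFDeriv ℝ (n + 1) f x (v ∘ (Equiv.swap k.castSucc k.succ))
        = iteratedFDeriv ℝ (n + 1) f x v := by
    intro n
    induction n with
    | zero => intro x k; exact k.elim0
    | succ n ih =>
      intro x k v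
      induction k using Fin.cases with
      | zero =>
        have e : ∀ w : Fin (n + 2) → E, iteratedFDeriv ℝ (n + 2) f x w =
            fderiv ℝ (fderiv ℝ (fun y => iteratedFDeriv ℝ n f y (Fin.tail (Fin.tail w)))) x (w 0) (w 1) := by
          intro w
          rw [(hdiff (n + 1) x).iteratedFDeriv_succ_apply_left']
          have : (fun y => iteratedFDeriv ℝ (n + 1) f y (Fin.tail w)) =
            fun y => fderiv ℝ (fun y => iteratedFDeriv ℝ n f y (Fin.tail (Fin.tail w))) y (w 1) := by
            ext y
            rw [(hdiff n y).iteratedFDeriv_succ_apply_left']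
            rfl
          rw [this]
          have h2 : ContDiff ℝ 2 (fun y => iteratedFDeriv ℝ n f y (Fin.tail (Fin.tail w))) :=
            (ContinuousMultilinearMap.apply ℝ (fun _ : Fin n => E) ℝ (Fin.tail (Fin.tail w))).contDiff.comp (hcd n)
          have h3 : DifferentiableAt ℝ (fderiv ℝ (fun y => iteratedFDeriv ℝ n f y (Fin.tail (Fin.tail w)))) x :=
            ((h2.fderiv_right (m := 1) (by norm_num)).differentiable (by norm_num)) x
          rw [fderiv_clm_apply h3 (by fun_prop)]
          simp
        rw [e, e]
        have t : Fin.tail (Fin.tail (v ∘ Equiv.swap (Fin.castSucc (0 : Fin (n+1))) (Fin.succ 0))) =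
            Fin.tail (Fin.tail v) := by
          ext j
          simp only [Fin.tail, Function.comp]
          rw [Equiv.swap_apply_of_ne_of_ne]
          · simp [Fin.ext_iff]
          · simp [Fin.ext_iff]
        rw [t]
        have h2 : ContDiff ℝ 2 (fun y => iteratedFDeriv ℝ n f y (Fin.tail (Fin.tail v))) :=
            (ContinuousMultilinearMap.apply ℝ (fun _ : Fin n => E) ℝ (Fin.tail (Fin.tail v))).contDiff.comp (hcd n)
        have := (h2.contDiffAt (x := x)).isSymmSndFDerivAt (by simp)
        have := this (v 0) (v 1)
        simpa using this.symm
      | succ k =>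
        rw [(hdiff (n + 1) x).iteratedFDeriv_succ_apply_left',
          (hdiff (n + 1) x).iteratedFDeriv_succ_apply_left']
        have t : Fin.tail (v ∘ Equiv.swap (Fin.castSucc (Fin.succ k)) (Fin.succ (Fin.succ k))) =
            (Fin.tail v) ∘ Equiv.swap (Fin.castSucc k) (Fin.succ k) := by
          ext j
          simp only [Fin.tail, Function.comp, Equiv.swap_apply_def, Fin.castSucc_succ, Fin.succ_inj]
          split_ifs <;> rfl
        have t0 : (v ∘ Equiv.swap (Fin.castSucc (Fin.succ k)) (Fin.succ (Fin.succ k))) 0 = v 0 := by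
          simp only [Function.comp]
          rw [Equiv.swap_apply_of_ne_of_ne]
          · simp [Fin.ext_iff]
          · simp [Fin.ext_iff]
        rw [t, t0]
        simp_rw [ih]
  intro n
  cases n with
  | zero => intro x σ v; congr 1; ext j; exact j.elim0
  | succ n =>
    intro x σ
    have : σ ∈ Submonoid.closure (Set.range fun i : Fin n => Equiv.swap i.castSucc i.succ) := by
      rw [Equiv.Perm.mclosure_swap_castSucc_succ]; trivial
    induction this using Submonoid.closure_induction with
    | mem s hs => obtain ⟨k, rfl⟩ := hs; exact key n x k
    | one => intro v; rfl
    | mul a b _ _ ha hb =>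
      intro v
      rw [Equiv.Perm.coe_mul, ← Function.comp_assoc, hb, ha]

theorem polar {E : Type*} [AddCommGroup E] [Module ℝ E] (n : ℕ)
    (T : MultilinearMap ℝ (fun _ : Fin n => E) ℝ)
    (hT : ∀ (σ : Equiv.Perm (Fin n)) (v : Fin n → E), T (v ∘ σ) = T v) (w : E) (v : Fin n → E) :
    ∑ S : Finset (Fin n), (-1 : ℝ) ^ (Sᶜ).card * T (fun _ => w + ∑ j ∈ S, v j)
      = (n.factorial : ℝ) * T v := by
  classical
  have e1 : ∀ S : Finset (Fin n), T (fun _ => w + ∑ j ∈ S, v j) =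
      ∑ r : Fin n → Option (Fin n), (if (∀ k j, r k = some j → j ∈ S) then (1:ℝ) else 0) *
        T (fun k => (r k).elim w v) := by
    intro S
    have : (w + ∑ j ∈ S, v j) = ∑ o : Option (Fin n),
        (if (∀ j, o = some j → j ∈ S) then (1:ℝ) else 0) • o.elim w v := by
      rw [Fintype.sum_option]
      simp [Finset.sum_ite_mem]
    rw [this, T.map_sum]
    refine Finset.sum_congr rfl fun r _ => ?_
    rw [T.map_smul_univ, smul_eq_mul]
    congr 1
    rw [Finset.prod_ite_zero]
    simp
  simp_rw [e1, Finset.mul_sum]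
  rw [Finset.sum_comm]
  have e2 : ∀ r : Fin n → Option (Fin n),
     ∑ S : Finset (Fin n), (-1 : ℝ) ^ (Sᶜ).card *
       ((if (∀ k j, r k = some j → j ∈ S) then (1:ℝ) else 0) * T (fun k => (r k).elim w v))
      = if (∀ j, ∃ k, r k = some j) then T (fun k => (r k).elim w v) else 0 := by
    intro r
    simp_rw [← mul_assoc]
    rw [← Finset.sum_mul]
    have : ∑ S : Finset (Fin n), (-1 : ℝ) ^ (Sᶜ).card *
       ((if (∀ k j, r k = some j → j ∈ S) then (1:ℝ) else 0)) =
       ∏ j : Fin n, ((1:ℝ) + (if ∃ k, r k = some j then 0 else -1)) := by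
      rw [Finset.prod_add]
      rw [Finset.powerset_univ]
      refine Finset.sum_congr rfl fun S _ => ?_
      simp only [Finset.prod_const_one, one_mul]
      have h : (∀ k j, r k = some j → j ∈ S) ↔ ∀ j ∈ Sᶜ, ¬ ∃ k, r k = some j := by
        simp only [Finset.mem_compl, not_exists]
        exact ⟨fun h j hj k hk => hj (h k j hk), fun h k j hk => by
          by_contra hj; exact h j hj k hk⟩
      rw [← Finset.compl_eq_univ_sdiff]
      by_cases hh : ∀ k j, r k = some j → j ∈ S
      · rw [if_pos hh, mul_one, Finset.prod_congr rfl (g := fun _ => (-1:ℝ)), Finset.prod_const]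
        intro j hj
        rw [if_neg (h.1 hh j hj)]
      · rw [if_neg hh, mul_zero, eq_comm]
        rw [h] at hh
        push Not at hh
        obtain ⟨j, hj, hk⟩ := hh
        exact Finset.prod_eq_zero hj (if_pos hk)
    rw [this]
    by_cases hh : ∀ j, ∃ k, r k = some j
    · simp [hh]
    · rw [if_neg hh]
      push Not at hh
      obtain ⟨j, hj⟩ := hh
      rw [Finset.prod_eq_zero (Finset.mem_univ j), zero_mul]
      rw [if_neg (by push Not; exact hj)]; norm_num
  simp_rw [e2]
  rw [← Finset.sum_filter]
  have e3 : (Finset.univ.filter fun r : Fin n → Option (Fin n) => ∀ j, ∃ k, r k = some j) =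
      (Finset.univ : Finset (Equiv.Perm (Fin n))).image (fun σ k => some (σ k)) := by
    ext r
    simp only [Finset.mem_filter, Finset.mem_univ, true_and, Finset.mem_image]
    constructor
    · intro h
      choose g hg using h
      have ginj : Function.Injective g := by
        intro a b hab
        have := hg a
        rw [hab, hg b] at this
        exact (Option.some_injective _ this).symm
      have gb := Finite.injective_iff_bijective.1 ginj
      refine ⟨(Equiv.ofBijective g gb).symm, ?_⟩
      ext1 k
      obtain ⟨j, rfl⟩ := gb.2 k
      rw [hg, Equiv.ofBijective_symm_apply_apply]
    · rintro ⟨σ, rfl⟩ j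
      exact ⟨σ.symm j, by simp⟩
  rw [e3, Finset.sum_image]
  · have : ∀ σ : Equiv.Perm (Fin n), T (fun k => (some (σ k)).elim w v) = T v := fun σ => hT σ v
    simp only [this]
    simp [Fintype.card_perm]
  · intro σ _ τ _ h
    ext k
    have := congrFun h k
    simp at this
    rw [this]

theorem exists_coeff (i m : ℕ) (him : i < m) : ∃ c : Fin m → ℝ, ∀ k < m,
    ∑ j : Fin m, c j * (((j : ℕ) + 1 : ℝ) / m) ^ k = if k = i then (i.factorial : ℝ) else 0 := by
  have hm : (m : ℝ) ≠ 0 := by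
    have : m ≠ 0 := by omega
    exact_mod_cast this
  set s : Fin m → ℝ := fun j => ((j : ℕ) + 1 : ℝ) / m with hs
  have hinj : Function.Injective s := by
    intro a b hab
    simp only [hs] at hab
    field_simp at hab
    have : ((a : ℕ) : ℝ) = b := by linarith
    exact Fin.ext (by exact_mod_cast this)
  have hdet : IsUnit (Matrix.vandermonde s).det :=
    isUnit_iff_ne_zero.2 (Matrix.det_vandermonde_ne_zero_iff.2 hinj)
  let e : Fin m → ℝ := fun k => if (k : ℕ) = i then (i.factorial : ℝ) else 0
  refine ⟨Matrix.vecMul e (Matrix.vandermonde s)⁻¹, fun k hk => ?_⟩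
  have h : Matrix.vecMul (Matrix.vecMul e (Matrix.vandermonde s)⁻¹) (Matrix.vandermonde s) = e := by
    rw [Matrix.vecMul_vecMul, Matrix.nonsing_inv_mul _ hdet, Matrix.vecMul_one]
  have := congrFun h ⟨k, hk⟩
  simpa [Matrix.vecMul, dotProduct, Matrix.vandermonde_apply, e] using this

theorem peano (i n : ℕ) (hin : i ≤ n) (c : Fin (n+1) → ℝ)
    (hc : ∀ k < n + 1, ∑ j : Fin (n+1), c j * (((j : ℕ) + 1 : ℝ) / ((n+1 : ℕ) : ℝ)) ^ k
      = if k = i then (i.factorial : ℝ) else 0) :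
    ∃ A : ℝ, 0 < A ∧ ∀ H : ℝ → ℝ, Continuous H →
      |∑ j : Fin (n+1), c j * ∫ t in (0:ℝ)..(((j : ℕ) + 1 : ℝ) / ((n+1 : ℕ) : ℝ)),
         ((((j : ℕ) + 1 : ℝ) / ((n+1 : ℕ) : ℝ)) - t) ^ n * H t| ≤
      A * ∫ t in (0:ℝ)..1, t ^ (n - i) * |H t| := by
  set s : Fin (n+1) → ℝ := fun j => ((j : ℕ) + 1 : ℝ) / ((n+1 : ℕ) : ℝ) with hs
  set δ : ℝ := 1 / ((n+1 : ℕ) : ℝ) with hδ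
  have hn : (0 : ℝ) < ((n+1 : ℕ) : ℝ) := by positivity
  have hδ0 : 0 < δ := by positivity
  have hsδ : ∀ j, δ ≤ s j := by
    intro j; simp only [hs, hδ]; gcongr; simp
  have hs1 : ∀ j, s j ≤ 1 := by
    intro j; simp only [hs]
    rw [div_le_one hn]
    have := j.2
    exact_mod_cast this
  refine ⟨(n.choose i : ℝ) * i.factorial + ∑ j, |c j| * (δ⁻¹) ^ (n - i), ?_, ?_⟩
  · have : 0 < n.choose i := Nat.choose_pos hin
    have h2 := i.factorial_pos
    have : (0:ℝ) < (n.choose i : ℝ) * i.factorial := by positivity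
    have : 0 ≤ ∑ j, |c j| * (δ⁻¹) ^ (n - i) := Finset.sum_nonneg fun j _ => by positivity
    linarith
  intro H hH
  change |∑ j, c j * ∫ t in (0:ℝ)..s j, (s j - t) ^ n * H t| ≤ _
  have hI : ∀ (g : ℝ → ℝ) (a b : ℝ), Continuous g → IntervalIntegrable g volume a b :=
    fun g a b hg => hg.intervalIntegrable a b
  have split : ∀ j, ∫ t in (0:ℝ)..s j, (s j - t) ^ n * H t =
      (∫ t in (0:ℝ)..δ, (s j - t) ^ n * H t) + ∫ t in δ..s j, (s j - t) ^ n * H t := by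
    intro j
    rw [intervalIntegral.integral_add_adjacent_intervals] <;> apply hI <;> fun_prop
  simp_rw [split, mul_add]
  rw [Finset.sum_add_distrib]
  set J := ∫ t in (0:ℝ)..1, t ^ (n - i) * |H t| with hJ
  have hδ1 : δ ≤ 1 := (hsδ 0).trans (hs1 0)
  have sub : ∀ a b, 0 ≤ a → a ≤ b → b ≤ 1 → ∫ t in a..b, t ^ (n - i) * |H t| ≤ J := by
    intro a b ha hab hb
    apply intervalIntegral.integral_mono_interval ha hab hb
    · rw [Filter.EventuallyLE, ae_restrict_iff' measurableSet_Ioc]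
      refine Filter.Eventually.of_forall fun t ht => ?_
      have := ht.1.le
      simp only [Pi.zero_apply]
      positivity
    · apply hI; fun_prop
  have first : |∑ j, c j * ∫ t in (0:ℝ)..δ, (s j - t) ^ n * H t| ≤ (n.choose i : ℝ) * i.factorial * J := by
    have : ∑ j, c j * ∫ t in (0:ℝ)..δ, (s j - t) ^ n * H t =
        ∫ t in (0:ℝ)..δ, ((n.choose i : ℝ) * i.factorial * (-t) ^ (n - i)) * H t := by
      simp_rw [← intervalIntegral.integral_const_mul]
      rw [← intervalIntegral.integral_finsetSum]
      · congr 1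
        ext t
        simp_rw [← mul_assoc]
        rw [← Finset.sum_mul]
        congr 1
        simp_rw [sub_eq_add_neg, add_pow, Finset.mul_sum]
        rw [Finset.sum_comm]
        have : ∀ k ∈ Finset.range (n+1), ∑ j, c j * (s j ^ k * (-t) ^ (n - k) * (n.choose k : ℝ)) =
           (if k = i then (i.factorial : ℝ) else 0) * ((-t) ^ (n - k) * (n.choose k : ℝ)) := by
          intro k hk
          rw [← hc k (Finset.mem_range.1 hk), Finset.sum_mul]
          refine Finset.sum_congr rfl fun j _ => by ring
        rw [Finset.sum_congr rfl this]
        simp only [ite_mul, zero_mul, Finset.sum_ite_eq', Finset.mem_range]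
        rw [if_pos (by omega)]
        ring
      · intro j _; apply hI; fun_prop
    rw [this]
    refine (intervalIntegral.abs_integral_le_integral_abs hδ0.le).trans ?_
    have e : ∫ t in (0:ℝ)..δ, |((n.choose i : ℝ) * i.factorial * (-t) ^ (n - i)) * H t| =
       (n.choose i : ℝ) * i.factorial * ∫ t in (0:ℝ)..δ, t ^ (n - i) * |H t| := by
      rw [← intervalIntegral.integral_const_mul]
      apply intervalIntegral.integral_congr
      intro t ht
      rw [Set.uIcc_of_le hδ0.le] at ht
      simp only [abs_mul, abs_pow, abs_neg, abs_of_nonneg ht.1, Nat.abs_cast]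
      ring
    rw [e]
    exact mul_le_mul_of_nonneg_left (sub _ _ le_rfl hδ0.le hδ1) (by positivity)
  have second : ∀ j, |∫ t in δ..s j, (s j - t) ^ n * H t| ≤ (δ⁻¹) ^ (n - i) * J := by
    intro j
    refine (intervalIntegral.abs_integral_le_integral_abs (hsδ j)).trans ?_
    calc ∫ t in δ..s j, |(s j - t) ^ n * H t| ≤ ∫ t in δ..s j, (δ⁻¹) ^ (n - i) * (t ^ (n - i) * |H t|) := by
          apply intervalIntegral.integral_mono_on (hsδ j)
          · apply hI; fun_prop
          · apply hI; fun_prop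
          · intro t ht
            have ht0 : 0 < t := hδ0.trans_le ht.1
            rw [abs_mul, abs_pow, ← mul_assoc, ← mul_pow]
            have h1 : |s j - t| ^ n ≤ 1 := by
              apply pow_le_one₀ (abs_nonneg _)
              rw [abs_le]; constructor <;> linarith [ht.2, hs1 j, ht.1]
            have h2 : 1 ≤ (δ⁻¹ * t) ^ (n - i) := by
              apply one_le_pow₀
              rw [inv_mul_eq_div, one_le_div hδ0]; exact ht.1
            exact mul_le_mul_of_nonneg_right (h1.trans h2) (abs_nonneg _)
      _ = (δ⁻¹) ^ (n - i) * ∫ t in δ..s j, (t ^ (n - i) * |H t|) := by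
          rw [← intervalIntegral.integral_const_mul]
      _ ≤ _ := mul_le_mul_of_nonneg_left (sub _ _ hδ0.le (hsδ j) (hs1 j)) (by positivity)
  refine (abs_add_le _ _).trans ?_
  rw [add_mul]
  refine add_le_add first ?_
  refine (Finset.abs_sum_le_sum_abs _ _).trans ?_
  rw [Finset.sum_mul]
  refine Finset.sum_le_sum fun j _ => ?_
  rw [abs_mul, mul_assoc]
  exact mul_le_mul_of_nonneg_left (second j) (abs_nonneg _)

theorem ray_bound (i m : ℕ) (him : i < m) : ∃ A : ℝ, 0 < A ∧
    ∀ (E : Type) [NormedAddCommGroup E] [NormedSpace ℝ E] (f : E → ℝ),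
    ContDiff ℝ (⊤ : ℕ∞) f → ∀ (x v : E) (M : ℝ), (∀ t ∈ Set.Icc (0:ℝ) 1, |f (x + t • v)| ≤ M) →
    |iteratedFDeriv ℝ i f x (fun _ => v)| ≤
      A * (M + ‖v‖ ^ m * ∫ t in (0:ℝ)..1, t ^ (m - 1 - i) * ‖iteratedFDeriv ℝ m f (x + t • v)‖) := by
  obtain ⟨n, rfl⟩ : ∃ n, m = n + 1 := ⟨m - 1, by omega⟩
  obtain ⟨c, hc⟩ := exists_coeff i (n+1) him
  obtain ⟨A, hA, hP⟩ := peano i n (by omega) c hc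
  refine ⟨A + ∑ j, |c j|, add_pos_of_pos_of_nonneg hA (Finset.sum_nonneg fun j _ => abs_nonneg _), ?_⟩
  intro E _ _ f hf x v M hM
  have hM0 : 0 ≤ M := (abs_nonneg _).trans (hM 0 (by simp))
  set H : ℝ → ℝ := fun t => iteratedFDeriv ℝ (n+1) f (x + t • v) (fun _ => v) with hH
  have hDc : Continuous (iteratedFDeriv ℝ (n+1) f) :=
    hf.continuous_iteratedFDeriv (by exact_mod_cast le_top)
  have hHc : Continuous H := by
    have : Continuous fun t : ℝ => iteratedFDeriv ℝ (n+1) f (x + t • v) := hDc.comp (by fun_prop)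
    fun_prop
  set s : Fin (n+1) → ℝ := fun j => ((j : ℕ) + 1 : ℝ) / ((n+1 : ℕ) : ℝ) with hs
  have hn : (0 : ℝ) < ((n+1 : ℕ) : ℝ) := by positivity
  have hs0 : ∀ j, 0 < s j := fun j => by simp only [hs]; positivity
  have hs1 : ∀ j, s j ≤ 1 := by
    intro j; simp only [hs]
    rw [div_le_one hn]
    have := j.2
    exact_mod_cast this
  have taylor : ∀ j, f (x + s j • v) = ∑ k ∈ Finset.range (n+1), (k.factorial : ℝ)⁻¹ * (s j ^ k *
        iteratedFDeriv ℝ k f x (fun _ => v)) + (n.factorial : ℝ)⁻¹ *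
        ∫ t in (0:ℝ)..s j, (s j - t) ^ n * H t := by
    intro j
    have := map_add_eq_sum_add_integral_iteratedFDeriv (f := f) (x := x) (y := s j • v) (n := n)
      (fun t _ => (hf.of_le (by exact_mod_cast le_top)).contDiffAt)
    rw [this]
    simp only [smul_eq_mul]
    congr 1
    · refine Finset.sum_congr rfl fun k _ => ?_
      congr 1
      rw [(iteratedFDeriv ℝ k f x).map_smul_univ (fun _ => s j) (fun _ => v)]
      simp
    · congr 1
      have e := intervalIntegral.integral_comp_mul_left (fun t => (s j - t) ^ n * H t) (hs0 j).ne' (a := 0) (b := 1)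
      rw [mul_zero, mul_one, smul_eq_mul] at e
      have e' : ∫ t in (0:ℝ)..s j, (s j - t) ^ n * H t = s j * ∫ t in (0:ℝ)..1, (s j - s j * t) ^ n * H (s j * t) := by
        rw [e, ← mul_assoc, mul_inv_cancel₀ (hs0 j).ne', one_mul]
      rw [e', ← intervalIntegral.integral_const_mul]
      congr 1
      ext t
      rw [(iteratedFDeriv ℝ (n+1) f _).map_smul_univ (fun _ => s j) (fun _ => v)]
      simp only [hH, Finset.prod_const, Finset.card_univ, Fintype.card_fin, smul_eq_mul, smul_smul]
      rw [mul_comm t (s j)]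
      have : (s j - s j * t) = s j * (1 - t) := by ring
      rw [this, mul_pow]
      ring
  have ident : ∑ j, c j * f (x + s j • v) = iteratedFDeriv ℝ i f x (fun _ => v) +
      (n.factorial : ℝ)⁻¹ * ∑ j, c j * ∫ t in (0:ℝ)..s j, (s j - t) ^ n * H t := by
    simp_rw [taylor, mul_add]
    rw [Finset.sum_add_distrib]
    congr 1
    · simp_rw [Finset.mul_sum]
      rw [Finset.sum_comm]
      have : ∀ k ∈ Finset.range (n+1), ∑ j, c j * ((k.factorial : ℝ)⁻¹ * (s j ^ k *
        iteratedFDeriv ℝ k f x (fun _ => v))) = (if k = i then (i.factorial : ℝ) else 0) *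
          ((k.factorial : ℝ)⁻¹ * iteratedFDeriv ℝ k f x (fun _ => v)) := by
        intro k hk
        rw [← hc k (Finset.mem_range.1 hk), Finset.sum_mul]
        refine Finset.sum_congr rfl fun j _ => by ring
      rw [Finset.sum_congr rfl this]
      simp only [ite_mul, zero_mul, Finset.sum_ite_eq', Finset.mem_range]
      rw [if_pos (by omega)]
      have := i.factorial_ne_zero
      field_simp
    · rw [Finset.mul_sum]
      refine Finset.sum_congr rfl fun j _ => by ring
  have b1 : |∑ j, c j * f (x + s j • v)| ≤ (∑ j, |c j|) * M := by
    refine (Finset.abs_sum_le_sum_abs _ _).trans ?_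
    rw [Finset.sum_mul]
    refine Finset.sum_le_sum fun j _ => ?_
    rw [abs_mul]
    exact mul_le_mul_of_nonneg_left (hM _ ⟨(hs0 j).le, hs1 j⟩) (abs_nonneg _)
  set J := ∫ t in (0:ℝ)..1, t ^ (n - i) * ‖iteratedFDeriv ℝ (n+1) f (x + t • v)‖ with hJ
  have hJ0 : 0 ≤ J := intervalIntegral.integral_nonneg zero_le_one fun t ht => by
    have := ht.1; positivity
  have b3 : ∫ t in (0:ℝ)..1, t ^ (n - i) * |H t| ≤ ‖v‖ ^ (n+1) * J := by
    rw [hJ, ← intervalIntegral.integral_const_mul]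
    apply intervalIntegral.integral_mono_on zero_le_one
    · apply Continuous.intervalIntegrable; fun_prop
    · apply Continuous.intervalIntegrable
      have : Continuous fun t : ℝ => iteratedFDeriv ℝ (n+1) f (x + t • v) := hDc.comp (by fun_prop)
      fun_prop
    · intro t ht
      have : |H t| ≤ ‖iteratedFDeriv ℝ (n+1) f (x + t • v)‖ * ‖v‖ ^ (n+1) := by
        have := (iteratedFDeriv ℝ (n+1) f (x + t • v)).le_opNorm (fun _ => v)
        simpa using this
      have h0 : 0 ≤ t ^ (n-i) := pow_nonneg ht.1 _
      nlinarith
  have b2 := hP H hHc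
  have hfac : (n.factorial : ℝ)⁻¹ ≤ 1 := inv_le_one_of_one_le₀ (by exact_mod_cast n.factorial_pos)
  have hfac0 : 0 ≤ (n.factorial : ℝ)⁻¹ := by positivity
  have : iteratedFDeriv ℝ i f x (fun _ => v) = ∑ j, c j * f (x + s j • v) -
     (n.factorial : ℝ)⁻¹ * ∑ j, c j * ∫ t in (0:ℝ)..s j, (s j - t) ^ n * H t := by
    rw [ident]; ring
  rw [this]
  refine (abs_sub _ _).trans ?_
  rw [abs_mul, abs_of_nonneg hfac0]
  have hC0 : 0 ≤ ∑ j, |c j| := Finset.sum_nonneg fun j _ => abs_nonneg _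
  have b4 := b2.trans (mul_le_mul_of_nonneg_left b3 hA.le)
  have b5 := mul_le_mul hfac b4 (abs_nonneg _) zero_le_one
  have hvJ : 0 ≤ ‖v‖ ^ (n+1) * J := by positivity
  simp only [Nat.add_sub_cancel]
  nlinarith [mul_nonneg hA.le hM0, mul_nonneg hC0 hvJ]

theorem polar_bound {E : Type*} [NormedAddCommGroup E] [NormedSpace ℝ E] [MeasurableSpace E]
    [BorelSpace E] [FiniteDimensional ℝ E] (μ : Measure E) [μ.IsAddHaarMeasure]
    (n : ℕ) (hn : 1 ≤ n) (T : ContinuousMultilinearMap ℝ (fun _ : Fin n => E) ℝ)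
    (hT : ∀ (σ : Equiv.Perm (Fin n)) (v : Fin n → E), T (v ∘ σ) = T v)
    (x c : E) (r : ℝ) (hr : 0 < r) (I : ℝ) (hI0 : 0 ≤ I)
    (hI : ∫⁻ y in Metric.closedBall c r, ENNReal.ofReal |T (fun _ => y - x)| ∂μ ≤ ENNReal.ofReal I) :
    ‖T‖ ≤ (2 * n / r) ^ n * (2 ^ n * I / μ.real (Metric.closedBall c (r / 2))) := by
  have hn' : (0:ℝ) < n := by exact_mod_cast hn
  have hvol : 0 < μ.real (Metric.closedBall c (r / 2)) := by
    rw [Measure.real, ENNReal.toReal_pos_iff]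
    exact ⟨Metric.measure_closedBall_pos μ c (by positivity), measure_closedBall_lt_top⟩
  set ρ : ℝ := r / (2 * n) with hρ
  have hρ0 : 0 < ρ := by positivity
  have small : ∀ v : Fin n → E, (∀ j, ‖v j‖ ≤ ρ) →
      |T v| ≤ 2 ^ n * I / μ.real (Metric.closedBall c (r / 2)) := by
    intro v hv
    have pt : ∀ y : E, ENNReal.ofReal |T v| ≤
        ∑ S : Finset (Fin n), ENNReal.ofReal |T (fun _ => (y + ∑ j ∈ S, v j) - x)| := by
      intro y
      rw [← ENNReal.ofReal_sum_of_nonneg (fun _ _ => abs_nonneg _)]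
      apply ENNReal.ofReal_le_ofReal
      have h := polar n T.toMultilinearMap hT (y - x) v
      have h1 : |T v| ≤ |(n.factorial : ℝ) * T v| := by
        rw [abs_mul, Nat.abs_cast]
        have : (1:ℝ) ≤ n.factorial := by exact_mod_cast n.factorial_pos
        nlinarith [abs_nonneg (T v)]
      refine h1.trans ?_
      change (_ = (n.factorial : ℝ) * T v) at h
      rw [← h]
      refine (Finset.abs_sum_le_sum_abs _ _).trans (le_of_eq ?_)
      refine Finset.sum_congr rfl fun S _ => ?_
      rw [abs_mul, abs_pow, abs_neg, abs_one, one_pow, one_mul]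
      change |T _| = _
      congr 3
      ext1 _
      abel
    have int1 : μ (Metric.closedBall c (r/2)) * ENNReal.ofReal |T v| ≤ 2 ^ n * ENNReal.ofReal I := by
      calc μ (Metric.closedBall c (r/2)) * ENNReal.ofReal |T v|
          = ∫⁻ y in Metric.closedBall c (r/2), ENNReal.ofReal |T v| ∂μ := by
            rw [setLIntegral_const, mul_comm]
        _ ≤ ∫⁻ y in Metric.closedBall c (r/2), ∑ S : Finset (Fin n),
              ENNReal.ofReal |T (fun _ => (y + ∑ j ∈ S, v j) - x)| ∂μ := lintegral_mono pt
        _ = ∑ S : Finset (Fin n), ∫⁻ y in Metric.closedBall c (r/2),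
              ENNReal.ofReal |T (fun _ => (y + ∑ j ∈ S, v j) - x)| ∂μ := by
            rw [lintegral_finsetSum]
            intro S _
            have : Continuous fun y : E => T (fun _ => (y + ∑ j ∈ S, v j) - x) :=
              T.cont.comp (by fun_prop)
            fun_prop
        _ ≤ ∑ S : Finset (Fin n), ENNReal.ofReal I := by
            refine Finset.sum_le_sum fun S _ => le_trans ?_ hI
            rw [← lintegral_indicator measurableSet_closedBall, ← lintegral_indicator measurableSet_closedBall]
            rw [← lintegral_add_right_eq_self
              (fun y => (Metric.closedBall c r).indicator (fun y => ENNReal.ofReal |T fun _ => y - x|) y) (∑ j ∈ S, v j)]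
            refine lintegral_mono fun y => ?_
            by_cases hy : y ∈ Metric.closedBall c (r/2)
            · rw [Set.indicator_of_mem hy, Set.indicator_of_mem]
              rw [Metric.mem_closedBall, dist_eq_norm] at hy ⊢
              have h1 : ‖∑ j ∈ S, v j‖ ≤ r / 2 := by
                refine (norm_sum_le _ _).trans ?_
                refine (Finset.sum_le_sum fun j _ => hv j).trans ?_
                rw [Finset.sum_const, nsmul_eq_mul]
                have : (S.card : ℝ) ≤ n := by
                  have := Finset.card_le_univ S
                  rw [Fintype.card_fin] at this
                  exact_mod_cast this
                calc (S.card : ℝ) * ρ ≤ n * ρ := by gcongr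
                  _ = r / 2 := by rw [hρ]; field_simp
              have : y + ∑ j ∈ S, v j - c = (y - c) + ∑ j ∈ S, v j := by abel
              rw [this]
              exact (norm_add_le _ _).trans (by linarith)
            · rw [Set.indicator_of_notMem hy]; exact zero_le
        _ = _ := by simp
    have := ENNReal.toReal_mono (by finiteness) int1
    rw [ENNReal.toReal_mul, ENNReal.toReal_mul, ENNReal.toReal_ofReal (abs_nonneg _),
      ENNReal.toReal_ofReal hI0] at this
    rw [le_div_iff₀ hvol, mul_comm]
    simpa [Measure.real] using this
  refine T.opNorm_le_bound (by positivity) fun v => ?_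
  by_cases hz : ∃ j, v j = 0
  · obtain ⟨j, hj⟩ := hz
    rw [T.map_coord_zero j hj, norm_zero]
    positivity
  push Not at hz
  have := small (fun j => (ρ / ‖v j‖) • v j) (fun j => by
    rw [norm_smul, norm_div, norm_norm, div_mul_cancel₀ _ (norm_ne_zero_iff.2 (hz j)), Real.norm_of_nonneg hρ0.le])
  rw [T.map_smul_univ, smul_eq_mul, abs_mul, Finset.prod_div_distrib, Finset.prod_const,
    Finset.card_univ, Fintype.card_fin] at this
  have hP : 0 < ∏ j, ‖v j‖ := Finset.prod_pos fun j _ => norm_pos_iff.2 (hz j)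
  rw [abs_of_pos (by positivity)] at this
  have e : (2 * n / r : ℝ) = ρ⁻¹ := by rw [hρ, inv_div]
  rw [e, Real.norm_eq_abs]
  set Q := 2 ^ n * I / μ.real (Metric.closedBall c (r / 2))
  rw [div_mul_eq_mul_div, div_le_iff₀ hP] at this
  rw [inv_pow, mul_assoc, ← div_eq_inv_mul, le_div_iff₀ (by positivity)]
  linarith

theorem scale_lintegral {E : Type*} [NormedAddCommGroup E] [NormedSpace ℝ E] [MeasurableSpace E]
    [BorelSpace E] [FiniteDimensional ℝ E] (μ : Measure E) [μ.IsAddHaarMeasure]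
    (ψ : E → ℝ≥0∞) (hψ : Measurable ψ) (x c : E) (r t : ℝ) (hx : ‖x - c‖ ≤ r) (ht : 0 < t) (ht1 : t ≤ 1) :
    ∫⁻ y in Metric.closedBall c r, ψ (x + t • (y - x)) ∂μ ≤
      ENNReal.ofReal ((t ^ Module.finrank ℝ E)⁻¹) * ∫⁻ y in Metric.closedBall c r, ψ y ∂μ := by
  set Ψ := (Metric.closedBall c r).indicator ψ with hΨ
  have hΨm : Measurable Ψ := hψ.indicator measurableSet_closedBall
  calc ∫⁻ y in Metric.closedBall c r, ψ (x + t • (y - x)) ∂μ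
      ≤ ∫⁻ y, Ψ ((x - t • x) + t • y) ∂μ := by
        rw [← lintegral_indicator measurableSet_closedBall]
        refine lintegral_mono fun y => ?_
        by_cases hy : y ∈ Metric.closedBall c r
        · have e : x - t • x + t • y = x + t • (y - x) := by rw [smul_sub]; abel
          rw [Set.indicator_of_mem hy, e, hΨ, Set.indicator_of_mem]
          have := (convex_closedBall c r) (x := x) (by rwa [Metric.mem_closedBall, dist_eq_norm]) hy
            (a := 1 - t) (b := t) (by linarith) ht.le (by ring)
          convert this using 1
          rw [smul_sub, sub_smul, one_smul]; abel
        · rw [Set.indicator_of_notMem hy]; exact zero_le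
    _ = ∫⁻ z, Ψ ((x - t • x) + z) ∂(μ.map (t • ·)) := by
        rw [lintegral_map (by fun_prop) (by fun_prop)]
    _ = ENNReal.ofReal ((t ^ Module.finrank ℝ E)⁻¹) * ∫⁻ z, Ψ ((x - t • x) + z) ∂μ := by
        rw [Measure.map_addHaar_smul μ ht.ne', lintegral_smul_measure, smul_eq_mul,
          abs_of_nonneg (by positivity)]
    _ = _ := by
        rw [lintegral_add_left_eq_self, hΨ, lintegral_indicator measurableSet_closedBall]

theorem inner_bound {E : Type*} [NormedAddCommGroup E] [NormedSpace ℝ E] [MeasurableSpace E]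
    [BorelSpace E] [FiniteDimensional ℝ E] (μ : Measure E) [μ.IsAddHaarMeasure]
    (g : E → ℝ≥0∞) (hg : Measurable g) (x c : E) (r t : ℝ) (hx : ‖x - c‖ ≤ r) (ht : 0 < t) (ht1 : t ≤ 1)
    (N : ℝ≥0∞) (hN : ∫⁻ y in Metric.closedBall c r, g y ^ (2:ℝ) ∂μ ≤ N ^ (2:ℝ)) :
    ∫⁻ y in Metric.closedBall c r, g (x + t • (y - x)) ∂μ ≤
      ENNReal.ofReal (t ^ (-(Module.finrank ℝ E : ℝ) / 2)) * N * μ (Metric.closedBall c r) ^ (1 / 2 : ℝ) := by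
  have h1 := ENNReal.lintegral_mul_le_Lp_mul_Lq (μ.restrict (Metric.closedBall c r))
    Real.HolderConjugate.two_two (f := fun y => g (x + t • (y - x))) (g := fun _ => 1)
    (by fun_prop) (by fun_prop)
  simp only [Pi.mul_apply, mul_one, ENNReal.one_rpow, lintegral_one, Measure.restrict_apply_univ] at h1
  refine h1.trans ?_
  gcongr
  have h2 := (scale_lintegral μ (fun y => g y ^ (2:ℝ)) (by fun_prop) x c r t hx ht ht1).trans
    (mul_le_mul_right hN _)
  refine (ENNReal.rpow_le_rpow h2 (by norm_num : (0:ℝ) ≤ 1/2)).trans (le_of_eq ?_)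
  rw [ENNReal.mul_rpow_of_nonneg _ _ (by norm_num), ← ENNReal.rpow_mul]
  norm_num
  rw [ENNReal.ofReal_rpow_of_nonneg (by positivity) (by norm_num)]
  congr 2
  rw [← Real.rpow_natCast, ← Real.rpow_neg ht.le, ← Real.rpow_mul ht.le]
  congr 1
  ring

theorem ball_bound (d i m : ℕ) (hi : 1 ≤ i)
    (hstrict : (i : ℝ) < (m : ℝ) - (d : ℝ) / 2) :
    ∃ A : ℝ, 0 < A ∧ ∀ (f : EuclideanSpace ℝ (Fin d) → ℝ), ContDiff ℝ (⊤ : ℕ∞) f →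
      ∀ (x c : EuclideanSpace ℝ (Fin d)) (r M N : ℝ), 0 < r → 0 ≤ N → ‖x - c‖ ≤ r →
      (∀ y, |f y| ≤ M) →
      (∫⁻ y in Metric.closedBall c r, ‖iteratedFDeriv ℝ m f y‖ₑ ^ (2:ℝ) ≤ ENNReal.ofReal N ^ (2:ℝ)) →
      ‖iteratedFDeriv ℝ i f x‖ ≤ A * (r ^ (-(i:ℝ)) * M + r ^ ((m:ℝ) - (d:ℝ)/2 - i) * N) := by
  have him : i < m := by
    have : (i:ℝ) < m := lt_of_lt_of_le hstrict (by linarith [(Nat.cast_nonneg d : (0:ℝ) ≤ d)])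
    exact_mod_cast this
  obtain ⟨A₁, hA₁, hray⟩ := ray_bound i m him
  set K : ℝ≥0∞ := ∫⁻ t in Set.Ioc (0:ℝ) 1, ENNReal.ofReal (t ^ (m - 1 - i)) * ENNReal.ofReal (t ^ (-(d:ℝ)/2)) with hK
  have hKfin : K ≠ ⊤ := by
    have h1 : IntervalIntegrable (fun t : ℝ => t ^ ((m:ℝ) - 1 - i + -(d:ℝ)/2)) volume 0 1 :=
      intervalIntegral.intervalIntegrable_rpow' (by linarith)
    rw [intervalIntegrable_iff_integrableOn_Ioc_of_le zero_le_one] at h1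
    have h2 : K = ∫⁻ t in Set.Ioc (0:ℝ) 1, ENNReal.ofReal (t ^ ((m:ℝ) - 1 - i + -(d:ℝ)/2)) := by
      rw [hK]
      refine setLIntegral_congr_fun measurableSet_Ioc fun t ht => ?_
      have ht0 := ht.1
      rw [← ENNReal.ofReal_mul (by positivity), Real.rpow_add ht0, ← Real.rpow_natCast]
      congr 3
      rw [Nat.cast_sub (by omega), Nat.cast_sub (by omega)]
      simp
    rw [h2]
    exact h1.lintegral_lt_top.ne
  set k := K.toReal with hk
  have hk0 : 0 ≤ k := ENNReal.toReal_nonneg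
  set ω := (volume : Measure (EuclideanSpace ℝ (Fin d))).real (Metric.closedBall 0 1) with hω
  have hω0 : 0 < ω := by
    rw [hω, Measure.real, ENNReal.toReal_pos_iff]
    exact ⟨Metric.measure_closedBall_pos volume _ (by positivity), measure_closedBall_lt_top⟩
  refine ⟨(2 * i) ^ i * 2 ^ i * A₁ * 2 ^ d * (1 + 2 ^ m * k * ω ^ (-(1/2) : ℝ)), by positivity, ?_⟩
  intro f hf x c r M N hr hN hx hM hL
  have hM0 : 0 ≤ M := (abs_nonneg _).trans (hM 0)
  have hvol : ∀ s : ℝ, 0 ≤ s → (volume : Measure (EuclideanSpace ℝ (Fin d))) (Metric.closedBall c s) =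
      ENNReal.ofReal (s ^ d * ω) := by
    intro s hs
    rw [Measure.addHaar_closedBall' _ _ hs, ENNReal.ofReal_mul (by positivity), hω, Measure.real,
      ENNReal.ofReal_toReal measure_closedBall_lt_top.ne]
    simp
  have hDc : Continuous (iteratedFDeriv ℝ m f) :=
    hf.continuous_iteratedFDeriv (by exact_mod_cast le_top)
  set B := Metric.closedBall c r with hB
  set I : ℝ := A₁ * M * (r ^ d * ω) + A₁ * (2 * r) ^ m * (k * N * (r ^ d * ω) ^ (1/2 : ℝ)) with hI
  have hI0 : 0 ≤ I := by positivity
  have main : ∫⁻ y in B, ENNReal.ofReal |iteratedFDeriv ℝ i f x (fun _ => y - x)| ≤ ENNReal.ofReal I := by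
    calc ∫⁻ y in B, ENNReal.ofReal |iteratedFDeriv ℝ i f x (fun _ => y - x)|
        ≤ ∫⁻ y in B, (ENNReal.ofReal (A₁ * M) + ENNReal.ofReal (A₁ * (2 * r) ^ m) *
            ∫⁻ t in Set.Ioc (0:ℝ) 1, ENNReal.ofReal (t ^ (m - 1 - i)) * ‖iteratedFDeriv ℝ m f (x + t • (y - x))‖ₑ) := by
          refine setLIntegral_mono' measurableSet_closedBall fun y hy => ?_
          have h := hray _ f hf x (y - x) M (fun t _ => hM _)
          have e : ∫⁻ t in Set.Ioc (0:ℝ) 1, ENNReal.ofReal (t ^ (m - 1 - i)) * ‖iteratedFDeriv ℝ m f (x + t • (y - x))‖ₑ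
             = ENNReal.ofReal (∫ t in (0:ℝ)..1, t ^ (m - 1 - i) * ‖iteratedFDeriv ℝ m f (x + t • (y - x))‖) := by
            have hc : Continuous fun t : ℝ => t ^ (m - 1 - i) * ‖iteratedFDeriv ℝ m f (x + t • (y - x))‖ := by
              have : Continuous fun t : ℝ => iteratedFDeriv ℝ m f (x + t • (y - x)) := hDc.comp (by fun_prop)
              fun_prop
            rw [intervalIntegral.integral_of_le zero_le_one, ofReal_integral_eq_lintegral_ofReal]
            · refine setLIntegral_congr_fun measurableSet_Ioc fun t ht => ?_
              have ht0 := ht.1.le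
              rw [ENNReal.ofReal_mul (by positivity), ofReal_norm]
            · exact (intervalIntegrable_iff_integrableOn_Ioc_of_le zero_le_one).1 (hc.intervalIntegrable 0 1)
            · rw [Filter.EventuallyLE, ae_restrict_iff' measurableSet_Ioc]
              refine Filter.Eventually.of_forall fun t ht => ?_
              have := ht.1.le
              simp only [Pi.zero_apply]
              positivity
          rw [e]
          set J := ∫ t in (0:ℝ)..1, t ^ (m - 1 - i) * ‖iteratedFDeriv ℝ m f (x + t • (y - x))‖ with hJ
          have hJ0 : 0 ≤ J := intervalIntegral.integral_nonneg zero_le_one fun t ht => by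
            have := ht.1; positivity
          rw [← ENNReal.ofReal_mul (by positivity), ← ENNReal.ofReal_add (by positivity) (by positivity)]
          apply ENNReal.ofReal_le_ofReal
          refine h.trans ?_
          rw [mul_add, mul_assoc A₁ _ J]
          have hyx : ‖y - x‖ ≤ 2 * r := by
            rw [hB, Metric.mem_closedBall, dist_eq_norm] at hy
            have : y - x = (y - c) - (x - c) := by abel
            rw [this]
            exact (norm_sub_le _ _).trans (by linarith)
          gcongr
      _ = ENNReal.ofReal (A₁ * M) * volume B + ENNReal.ofReal (A₁ * (2 * r) ^ m) *
            ∫⁻ y in B, ∫⁻ t in Set.Ioc (0:ℝ) 1, ENNReal.ofReal (t ^ (m - 1 - i)) * ‖iteratedFDeriv ℝ m f (x + t • (y - x))‖ₑ := by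
          rw [lintegral_add_left measurable_const, setLIntegral_const, lintegral_const_mul' _ _ ENNReal.ofReal_ne_top]
      _ = ENNReal.ofReal (A₁ * M) * volume B + ENNReal.ofReal (A₁ * (2 * r) ^ m) *
            ∫⁻ t in Set.Ioc (0:ℝ) 1, ∫⁻ y in B, ENNReal.ofReal (t ^ (m - 1 - i)) * ‖iteratedFDeriv ℝ m f (x + t • (y - x))‖ₑ := by
          rw [lintegral_lintegral_swap]
          apply Measurable.aemeasurable
          have : Continuous fun p : EuclideanSpace ℝ (Fin d) × ℝ => iteratedFDeriv ℝ m f (x + p.2 • (p.1 - x)) :=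
            hDc.comp (by fun_prop)
          unfold Function.uncurry
          have h2 : Continuous fun p : EuclideanSpace ℝ (Fin d) × ℝ => ‖iteratedFDeriv ℝ m f (x + p.2 • (p.1 - x))‖ₑ :=
            this.enorm
          have h3 := h2.measurable
          have h4 : Continuous fun p : EuclideanSpace ℝ (Fin d) × ℝ => ENNReal.ofReal (p.2 ^ (m - 1 - i)) :=
            ENNReal.continuous_ofReal.comp (by fun_prop)
          exact h4.measurable.mul h3
      _ ≤ ENNReal.ofReal (A₁ * M) * volume B + ENNReal.ofReal (A₁ * (2 * r) ^ m) *
            ∫⁻ t in Set.Ioc (0:ℝ) 1, (ENNReal.ofReal (t ^ (m - 1 - i)) * ENNReal.ofReal (t ^ (-(d:ℝ)/2))) *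
              (ENNReal.ofReal N * volume B ^ (1/2:ℝ)) := by
          refine add_le_add le_rfl (mul_le_mul_right ?_ _)
          refine setLIntegral_mono' measurableSet_Ioc fun t ht => ?_
          rw [lintegral_const_mul' _ _ ENNReal.ofReal_ne_top, mul_assoc]
          refine mul_le_mul_right ?_ _
          have := inner_bound volume (fun y => ‖iteratedFDeriv ℝ m f y‖ₑ) hDc.enorm.measurable x c r t hx ht.1 ht.2
            (ENNReal.ofReal N) hL
          rw [finrank_euclideanSpace_fin, mul_assoc] at this
          exact this
      _ = ENNReal.ofReal I := by
          rw [lintegral_mul_const' _ _ (by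
            rw [hB, hvol r hr.le]; finiteness), ← hK, hB, hvol r hr.le,
            ← ENNReal.ofReal_toReal hKfin, ← hk, ENNReal.ofReal_rpow_of_nonneg (by positivity) (by norm_num),
            ← ENNReal.ofReal_mul (by positivity), ← ENNReal.ofReal_mul (by positivity),
            ← ENNReal.ofReal_mul (by positivity), ← ENNReal.ofReal_mul (by positivity),
            ← ENNReal.ofReal_add (by positivity) (by positivity), hI]
          congr 1
          ring
  have fin := polar_bound volume i hi (iteratedFDeriv ℝ i f x)
    (fun σ v => symm_iter f hf i x σ v) x c r hr I hI0 main
  refine fin.trans ?_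
  rw [Measure.real, hvol (r/2) (by positivity), ENNReal.toReal_ofReal (by positivity), hI]
  have e1 : r ^ ((m:ℝ) - (d:ℝ)/2 - i) = r ^ m * (r ^ d) ^ (-(1/2):ℝ) * r ^ (-(i:ℝ)) := by
    rw [← Real.rpow_natCast r m, ← Real.rpow_natCast r d, ← Real.rpow_mul hr.le, ← Real.rpow_add hr,
      ← Real.rpow_add hr]
    congr 1; ring
  have e2 : r ^ (-(i:ℝ)) = (r ^ i)⁻¹ := by rw [Real.rpow_neg hr.le, Real.rpow_natCast]
  have e3 : (r ^ d * ω) ^ (1/2:ℝ) = (r ^ d * ω) * ((r ^ d) ^ (-(1/2):ℝ) * ω ^ (-(1/2):ℝ)) := by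
    rw [← Real.mul_rpow (by positivity) (by positivity)]
    nth_rewrite 2 [← Real.rpow_one (r ^ d * ω)]
    rw [← Real.rpow_add (by positivity)]
    norm_num
  rw [e1, e2, e3]
  set a := (r ^ d) ^ (-(1/2):ℝ) with ha
  set b := ω ^ (-(1/2):ℝ) with hb
  have ha0 : 0 < a := by positivity
  have hb0 : 0 < b := by positivity
  have : (2 * (i:ℝ) / r) ^ i * (2 ^ i * (A₁ * M * (r ^ d * ω) + A₁ * (2 * r) ^ m * (k * N * (r ^ d * ω * (a * b)))) / ((r / 2) ^ d * ω))
     = (2 * (i:ℝ)) ^ i * 2 ^ i * A₁ * 2 ^ d * ((r ^ i)⁻¹ * M + 2 ^ m * k * b * (r ^ m * a * (r ^ i)⁻¹ * N)) := by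
    rw [div_pow, div_pow, mul_pow 2 r m]
    field_simp
  rw [this]
  have hpos : 0 ≤ (2 * (i:ℝ)) ^ i * 2 ^ i * A₁ * 2 ^ d := by positivity
  rw [mul_assoc ((2 * (i:ℝ)) ^ i * 2 ^ i * A₁ * 2 ^ d)]
  refine mul_le_mul_of_nonneg_left ?_ hpos
  have p1 : 0 ≤ (r ^ i)⁻¹ * M := by positivity
  have p2 : 0 ≤ r ^ m * a * (r ^ i)⁻¹ * N := by positivity
  have p3 : 0 ≤ 2 ^ m * k * b := by positivity
  nlinarith [mul_nonneg p3 p1]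

theorem opt_bound (d i m : ℕ) (hi : 1 ≤ i)
    (hstrict : (i : ℝ) < (m : ℝ) - (d : ℝ) / 2) :
    ∃ A : ℝ, 0 < A ∧ ∀ (f : EuclideanSpace ℝ (Fin d) → ℝ), ContDiff ℝ (⊤ : ℕ∞) f →
      ∀ (x c : EuclideanSpace ℝ (Fin d)) (R M N : ℝ), 0 < R → 0 ≤ N → ‖x - c‖ ≤ R →
      (∀ y, |f y| ≤ M) →
      (∫⁻ y in Metric.closedBall c R, ‖iteratedFDeriv ℝ m f y‖ₑ ^ (2:ℝ) ≤ ENNReal.ofReal N ^ (2:ℝ)) →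
      ‖iteratedFDeriv ℝ i f x‖ ≤ A * (M ^ (1 - (i:ℝ) / ((m:ℝ) - (d:ℝ)/2)) * N ^ ((i:ℝ) / ((m:ℝ) - (d:ℝ)/2))
        + M * R ^ (-(i:ℝ))) := by
  obtain ⟨A, hA, hball⟩ := ball_bound d i m hi hstrict
  refine ⟨2 * A, by positivity, ?_⟩
  intro f hf x c R M N hR hN hx hM hL
  have hM0 : 0 ≤ M := (abs_nonneg _).trans (hM 0)
  set a : ℝ := (m:ℝ) - (d:ℝ)/2 with ha
  have hi' : (1:ℝ) ≤ i := by exact_mod_cast hi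
  have ha0 : 0 < a := by linarith
  have hp1 : 0 ≤ M ^ (1 - (i:ℝ) / a) * N ^ ((i:ℝ) / a) := by positivity
  have hp2 : 0 ≤ M * R ^ (-(i:ℝ)) := by positivity
  rcases hM0.eq_or_lt with hMz | hMpos
  · have hf0 : f = 0 := by
      ext y
      have := hM y
      rw [← hMz] at this
      exact abs_nonpos_iff.1 this
    have : iteratedFDeriv ℝ i f x = 0 := by
      rw [hf0, iteratedFDeriv_zero]; rfl
    rw [this, norm_zero]
    positivity
  by_cases hcase : N * R ^ a ≤ M
  · have h := hball f hf x c R M N hR hN hx hM hL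
    refine h.trans ?_
    have e : R ^ (a - i) = R ^ a * R ^ (-(i:ℝ)) := by
      rw [← Real.rpow_add hR]; congr 1
    have : R ^ (a - i) * N ≤ M * R ^ (-(i:ℝ)) := by
      rw [e]
      have : 0 ≤ R ^ (-(i:ℝ)) := by positivity
      nlinarith
    nlinarith
  · push Not at hcase
    have hN0 : 0 < N := by
      rcases hN.eq_or_lt with h | h
      · rw [← h, zero_mul] at hcase; linarith
      · exact h
    set r : ℝ := (M / N) ^ (1 / a) with hr
    have hr0 : 0 < r := by positivity
    have hra : r ^ a = M / N := by
      rw [hr, ← Real.rpow_mul (by positivity), one_div_mul_cancel ha0.ne', Real.rpow_one]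
    have hrR : r ≤ R := by
      rw [← Real.rpow_le_rpow_iff hr0.le hR.le ha0, hra, div_le_iff₀ hN0]
      linarith
    set c' := x + (r / R) • (c - x) with hc'
    have hq : r / R ≤ 1 := (div_le_one hR).2 hrR
    have hq0 : 0 ≤ r / R := by positivity
    have hxc' : ‖x - c'‖ ≤ r := by
      have : x - c' = (r / R) • (x - c) := by rw [hc', smul_sub, smul_sub]; abel
      rw [this, norm_smul, Real.norm_of_nonneg hq0]
      calc r / R * ‖x - c‖ ≤ r / R * R := by gcongr
        _ = r := by field_simp
    have hsub : Metric.closedBall c' r ⊆ Metric.closedBall c R := by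
      apply Metric.closedBall_subset_closedBall'
      have : c' - c = (1 - r / R) • (x - c) := by
        rw [hc', sub_smul, one_smul, smul_sub, smul_sub]; abel
      rw [dist_eq_norm, this, norm_smul, Real.norm_of_nonneg (by linarith)]
      calc r + (1 - r / R) * ‖x - c‖ ≤ r + (1 - r / R) * R := by
            have : 0 ≤ 1 - r / R := by linarith
            gcongr
        _ = R := by field_simp; ring
    have h := hball f hf x c' r M N hr0 hN hxc' hM ((lintegral_mono_set hsub).trans hL)
    refine h.trans ?_
    have e : r ^ (a - i) = r ^ a * r ^ (-(i:ℝ)) := by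
      rw [← Real.rpow_add hr0]; congr 1
    have e2 : r ^ (-(i:ℝ)) * M = M ^ (1 - (i:ℝ) / a) * N ^ ((i:ℝ) / a) := by
      rw [hr, ← Real.rpow_mul (by positivity), Real.div_rpow hM0 hN]
      have : 1 / a * -(i:ℝ) = -((i:ℝ)/a) := by ring
      rw [this, Real.rpow_neg hN, Real.rpow_sub hMpos, Real.rpow_neg hM0, Real.rpow_one]
      field_simp
    have e3 : r ^ (a - i) * N = r ^ (-(i:ℝ)) * M := by
      rw [e, hra]; field_simp
    rw [e3, e2]
    nlinarith

theorem geom (d : ℕ) (Cw : ℝ) (hCw : 1 ≤ Cw) (φ : EuclideanSpace ℝ (Fin d) → ℝ) (φv : ℕ → ℝ)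
    (h0 : ∀ x : EuclideanSpace ℝ (Fin d), ‖x‖ ≤ 1 →
          φ x ∈ Set.Icc (φv 0 / Cw) (Cw * φv 0))
    (h1 : ∀ (j : ℕ) (x : EuclideanSpace ℝ (Fin d)),
          (2 : ℝ) ^ j ≤ ‖x‖ → ‖x‖ ≤ (2 : ℝ) ^ (j + 1) →
          φ x ∈ Set.Icc (φv (j + 1) / Cw) (Cw * φv (j + 1)))
    (x : EuclideanSpace ℝ (Fin d)) :
    ∃ c : EuclideanSpace ℝ (Fin d), ‖x - c‖ ≤ Real.sqrt (1 + ‖x‖ ^ 2) / 16 ∧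
      ∀ y ∈ Metric.closedBall c (Real.sqrt (1 + ‖x‖ ^ 2) / 16), φ x ≤ Cw ^ 2 * φ y := by
  have hC : 0 < Cw := by linarith
  have comp : ∀ (v : ℝ) (y : EuclideanSpace ℝ (Fin d)), φ x ∈ Set.Icc (v / Cw) (Cw * v) →
      φ y ∈ Set.Icc (v / Cw) (Cw * v) → φ x ≤ Cw ^ 2 * φ y := by
    intro v y hx hy
    have h2 := hy.1
    rw [div_le_iff₀ hC] at h2
    have := hx.2
    nlinarith
  set R := Real.sqrt (1 + ‖x‖ ^ 2) / 16 with hR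
  have hR0 : 0 < R := by positivity
  rcases le_or_gt ‖x‖ 1 with hx | hx
  · have hR1 : R ≤ 1 := by
      have : Real.sqrt (1 + ‖x‖ ^ 2) ≤ 2 := by
        rw [Real.sqrt_le_left (by norm_num)]
        nlinarith [norm_nonneg x]
      rw [hR]; linarith
    refine ⟨(1 - R) • x, ?_, fun y hy => comp (φv 0) y (h0 x hx) (h0 y ?_)⟩
    · have : x - (1 - R) • x = R • x := by rw [sub_smul, one_smul]; abel
      rw [this, norm_smul, Real.norm_of_nonneg hR0.le]
      nlinarith [norm_nonneg x]
    · rw [Metric.mem_closedBall, dist_eq_norm] at hy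
      have e : y = (y - (1 - R) • x) + (1 - R) • x := by abel
      rw [e]
      refine (norm_add_le _ _).trans ?_
      rw [norm_smul, Real.norm_of_nonneg (by linarith : 0 ≤ 1 - R)]
      nlinarith [norm_nonneg x]
  · obtain ⟨j, hj1, hj2⟩ := exists_nat_pow_near hx.le (one_lt_two : (1:ℝ) < 2)
    set P : ℝ := (2:ℝ) ^ j with hP
    have hP1 : 1 ≤ P := one_le_pow₀ (by norm_num)
    have hP2 : (2:ℝ) ^ (j + 1) = 2 * P := by rw [pow_succ]; ring
    rw [hP2] at hj2
    have hRP : R ≤ P / 4 := by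
      have : Real.sqrt (1 + ‖x‖ ^ 2) ≤ 4 * P := by
        rw [Real.sqrt_le_left (by positivity)]
        nlinarith [norm_nonneg x]
      rw [hR]; linarith
    have hxx := h1 j x hj1 (by rw [hP2]; exact hj2.le)
    have hx0 : ‖x‖ ≠ 0 := by linarith
    have fin : ∀ ε : ℝ, |ε| = 1 → P ≤ ‖x‖ + ε * R - R → ‖x‖ + ε * R + R ≤ 2 * P →
        ∃ c : EuclideanSpace ℝ (Fin d), ‖x - c‖ ≤ R ∧
          ∀ y ∈ Metric.closedBall c R, φ x ≤ Cw ^ 2 * φ y := by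
      intro ε hε hl hu
      set c := (1 + ε * R / ‖x‖) • x with hc
      have hcn : ‖c‖ = ‖x‖ + ε * R := by
        have : 1 + ε * R / ‖x‖ = (‖x‖ + ε * R) / ‖x‖ := by field_simp
        rw [hc, this, norm_smul, norm_div, norm_norm, div_mul_cancel₀ _ hx0, Real.norm_of_nonneg (by linarith)]
      refine ⟨c, ?_, fun y hy => comp (φv (j+1)) y hxx (h1 j y ?_ ?_)⟩
      · have : x - c = (-(ε * R / ‖x‖)) • x := by rw [hc, add_smul, one_smul, neg_smul]; abel
        rw [this, norm_smul, norm_neg, norm_div, norm_norm, div_mul_cancel₀ _ hx0, norm_mul,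
          Real.norm_eq_abs, hε, one_mul, Real.norm_of_nonneg hR0.le]
      · rw [Metric.mem_closedBall, dist_eq_norm, norm_sub_rev] at hy
        have := norm_sub_norm_le c y
        linarith
      · rw [Metric.mem_closedBall, dist_eq_norm] at hy
        have := norm_sub_norm_le y c
        rw [hP2]
        linarith
    rcases le_or_gt ‖x‖ (3 / 2 * P) with h | h
    · exact fin 1 (by norm_num) (by linarith) (by linarith)
    · exact fin (-1) (by norm_num) (by linarith) (by linarith)

/-- pointwise (L^∞-target) weighted Gagliardo–Nirenberg inequality on `ℝ^d`, with
`p = ∞`, `q = 2`, `ψ ≡ 1`, `θ = i/(m − d/2)`, and weight `φ` comparable to constants `φ_j` on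
each dyadic annulus (index `j = −1` corresponding to index `0` of the sequence `φv`, and
`j ≥ 0` to index `j + 1`). The constant `C′` depends only on `d, i, m, C`, not on `f` or `φ`. -/
theorem stmt6 (d i m : ℕ) (hd : 1 ≤ d) (hi : 1 ≤ i) (him : i ≤ m)
    (hstrict : (i : ℝ) < (m : ℝ) - (d : ℝ) / 2)
    (Cw : ℝ) (hCw : 1 ≤ Cw) :
    ∃ C' : ℝ, 0 < C' ∧
      ∀ (f φ : EuclideanSpace ℝ (Fin d) → ℝ) (φv : ℕ → ℝ),
        ContDiff ℝ (⊤ : ℕ∞) f →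
        (∃ B : ℝ, ∀ x, |f x| ≤ B) →
        (∀ x, 0 ≤ φ x) →
        φv 0 = 1 → φv 1 = 1 →
        (∀ x : EuclideanSpace ℝ (Fin d), ‖x‖ ≤ 1 →
          φ x ∈ Set.Icc (φv 0 / Cw) (Cw * φv 0)) →
        (∀ (j : ℕ) (x : EuclideanSpace ℝ (Fin d)),
          (2 : ℝ) ^ j ≤ ‖x‖ → ‖x‖ ≤ (2 : ℝ) ^ (j + 1) →
          φ x ∈ Set.Icc (φv (j + 1) / Cw) (Cw * φv (j + 1))) →
        eLpNorm (fun x => φ x ^ m * ‖iteratedFDeriv ℝ m f x‖) 2 volume < ⊤ →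
        ∀ x : EuclideanSpace ℝ (Fin d), 0 < φ x →
          ‖iteratedFDeriv ℝ i f x‖ ≤
            C' * ((eLpNorm f ⊤ volume).toReal ^ (1 - (i : ℝ) / ((m : ℝ) - (d : ℝ) / 2)) *
                  (eLpNorm (fun x => φ x ^ m * ‖iteratedFDeriv ℝ m f x‖) 2 volume).toReal ^
                    ((i : ℝ) / ((m : ℝ) - (d : ℝ) / 2)) *
                  φ x ^ (-(m : ℝ) * ((i : ℝ) / ((m : ℝ) - (d : ℝ) / 2)))
                + (eLpNorm f ⊤ volume).toReal * Real.sqrt (1 + ‖x‖ ^ 2) ^ (-(i : ℝ))) := by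
  obtain ⟨A, hA, hopt⟩ := opt_bound d i m hi hstrict
  set a : ℝ := (m:ℝ) - (d:ℝ)/2 with ha
  set θ : ℝ := (i:ℝ) / a with hθ
  have hi' : (1:ℝ) ≤ i := by exact_mod_cast hi
  have ha0 : 0 < a := by linarith
  have hC : 0 < Cw := by linarith
  have hθ0 : 0 < θ := by positivity
  refine ⟨A * (((Cw ^ 2) ^ m) ^ θ + 16 ^ i), by positivity, ?_⟩
  intro f φ φv hf hB hφ _ _ h0 h1 hW x hx
  set g := fun x => φ x ^ m * ‖iteratedFDeriv ℝ m f x‖ with hg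
  set W := (eLpNorm g 2 volume).toReal with hWdef
  set M := (eLpNorm f ⊤ volume).toReal with hMdef
  have hW0 : 0 ≤ W := ENNReal.toReal_nonneg
  have hM0 : 0 ≤ M := ENNReal.toReal_nonneg
  have hM : ∀ y, |f y| ≤ M := by
    obtain ⟨B, hB⟩ := hB
    have hfin : eLpNorm f ⊤ volume ≠ ⊤ := by
      rw [eLpNorm_exponent_top]
      refine ne_top_of_le_ne_top (ENNReal.ofReal_ne_top (r := B)) ?_
      refine eLpNormEssSup_le_of_ae_bound ?_
      exact Filter.Eventually.of_forall hB
    have hae : ∀ᵐ y, |f y| ≤ M := by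
      filter_upwards [ae_le_eLpNormEssSup (f := f) (μ := volume)] with y hy
      have := ENNReal.toReal_mono (by rwa [eLpNorm_exponent_top] at hfin) hy
      rw [hMdef, eLpNorm_exponent_top]
      simpa using this
    have hd := Measure.dense_of_ae hae
    have hcl : IsClosed {y | |f y| ≤ M} := isClosed_le hf.continuous.abs continuous_const
    intro y
    have := hd y
    rw [hcl.closure_eq] at this
    exact this
  obtain ⟨c, hxc, hc⟩ := geom d Cw hCw φ φv h0 h1 x
  set R := Real.sqrt (1 + ‖x‖ ^ 2) / 16 with hR
  have hR0 : 0 < R := by positivity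
  set N := (Cw ^ 2 / φ x) ^ m * W with hN
  have hN0 : 0 ≤ N := by positivity
  have hL : ∫⁻ y in Metric.closedBall c R, ‖iteratedFDeriv ℝ m f y‖ₑ ^ (2:ℝ) ≤ ENNReal.ofReal N ^ (2:ℝ) := by
    have hWsq : ∫⁻ y, ‖g y‖ₑ ^ (2:ℝ) = ENNReal.ofReal W ^ (2:ℝ) := by
      rw [hWdef, ENNReal.ofReal_toReal hW.ne, eLpNorm_eq_lintegral_rpow_enorm_toReal (by norm_num) (by norm_num),
        ← ENNReal.rpow_mul]
      norm_num
    calc ∫⁻ y in Metric.closedBall c R, ‖iteratedFDeriv ℝ m f y‖ₑ ^ (2:ℝ)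
        ≤ ∫⁻ y in Metric.closedBall c R, ENNReal.ofReal ((Cw ^ 2 / φ x) ^ m) ^ (2:ℝ) * ‖g y‖ₑ ^ (2:ℝ) := by
          refine setLIntegral_mono' measurableSet_closedBall fun y hy => ?_
          rw [← ENNReal.mul_rpow_of_nonneg _ _ (by norm_num)]
          refine ENNReal.rpow_le_rpow ?_ (by norm_num)
          have hg0 : 0 ≤ g y := mul_nonneg (pow_nonneg (hφ y) _) (norm_nonneg _)
          rw [Real.enorm_of_nonneg hg0, ← ENNReal.ofReal_mul (by positivity), ← ofReal_norm]
          apply ENNReal.ofReal_le_ofReal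
          simp only [hg]
          rw [← mul_assoc, ← mul_pow]
          refine le_mul_of_one_le_left (norm_nonneg _) (one_le_pow₀ ?_)
          rw [div_mul_eq_mul_div, one_le_div hx]
          exact hc y hy
      _ = ENNReal.ofReal ((Cw ^ 2 / φ x) ^ m) ^ (2:ℝ) * ∫⁻ y in Metric.closedBall c R, ‖g y‖ₑ ^ (2:ℝ) := by
          rw [lintegral_const_mul' _ _ (by finiteness)]
      _ ≤ ENNReal.ofReal ((Cw ^ 2 / φ x) ^ m) ^ (2:ℝ) * ∫⁻ y, ‖g y‖ₑ ^ (2:ℝ) :=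
          mul_le_mul_right (setLIntegral_le_lintegral _ _) _
      _ = _ := by
          rw [hWsq, ← ENNReal.mul_rpow_of_nonneg _ _ (by norm_num), ← ENNReal.ofReal_mul (by positivity)]
  have h := hopt f hf x c R M N hR0 hN0 hxc hM hL
  refine h.trans ?_
  rw [mul_assoc]
  refine mul_le_mul_of_nonneg_left ?_ hA.le
  have e1 : N ^ θ = ((Cw ^ 2) ^ m) ^ θ * (W ^ θ * φ x ^ (-(m:ℝ) * θ)) := by
    rw [hN, Real.mul_rpow (by positivity) hW0, div_pow, Real.div_rpow (by positivity) (by positivity),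
      ← Real.rpow_natCast (φ x) m, ← Real.rpow_mul hx.le, neg_mul, Real.rpow_neg hx.le]
    field_simp
  have e2 : R ^ (-(i:ℝ)) = 16 ^ i * Real.sqrt (1 + ‖x‖ ^ 2) ^ (-(i:ℝ)) := by
    rw [hR, Real.div_rpow (by positivity) (by norm_num), Real.rpow_neg (by norm_num : (0:ℝ) ≤ 16),
      Real.rpow_natCast, div_inv_eq_mul, mul_comm]
  rw [e1, e2]
  have p1 : 0 ≤ M ^ (1 - θ) * W ^ θ * φ x ^ (-(m:ℝ) * θ) := by positivity
  have p2 : 0 ≤ M * Real.sqrt (1 + ‖x‖ ^ 2) ^ (-(i:ℝ)) := by positivity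
  have p3 : 0 ≤ ((Cw ^ 2) ^ m) ^ θ := by positivity
  have p4 : (0:ℝ) ≤ 16 ^ i := by positivity
  nlinarith [mul_nonneg p3 p2, mul_nonneg p4 p1]
end
end

section
/- Define r* = 10/(2 + 2√2) = 5(√2 − 1), and for real r set ℛ₁ = √(r² − 44r + 92), ℛ₂ = 7√7 · √( r( r( r(79r − 79ℛ₁ − 2906) + 2(584ℛ₁ + 6733) ) − 24(107ℛ₁ + 1062) ) + 2704ℛ₁ + 23424 ), W₁ = 20(r−1)/(−r + ℛ₁ + 8) − (2/7)(2r + 5), and Z₁ = (1/147)( (980r + √2·ℛ₂ − 980)/(r − ℛ₁ − 8) + 7(94 − 17r) ). Then there exists ε > 0 such that for every r with r* − ε < r < r*: W₁ + Z₁ < 0. -/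
noncomputable section

/-- The critical self-similarity exponent `r* = 10/(2 + 2√2) = 5(√2 − 1)`. -/
def rstar : ℝ := 10 / (2 + 2 * Real.sqrt 2)

/-- `ℛ₁ = √(r² − 44r + 92)`. -/
def R1 (r : ℝ) : ℝ := Real.sqrt (r ^ 2 - 44 * r + 92)

/-- `ℛ₂`. -/
def R2 (r : ℝ) : ℝ :=
  7 * Real.sqrt 7 * Real.sqrt
    (r * (r * (r * (79 * r - 79 * R1 r - 2906) + 2 * (584 * R1 r + 6733))
        - 24 * (107 * R1 r + 1062)) + 2704 * R1 r + 23424)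

/-- First-order Taylor coefficient `W₁` at the sonic point. -/
def W1 (r : ℝ) : ℝ := 20 * (r - 1) / (-r + R1 r + 8) - (2 / 7) * (2 * r + 5)

/-- First-order Taylor coefficient `Z₁` at the sonic point. -/
def Z1 (r : ℝ) : ℝ :=
  (1 / 147) * ((980 * r + Real.sqrt 2 * R2 r - 980) / (r - R1 r - 8) + 7 * (94 - 17 * r))

/-- for `r` sufficiently close to `r*` from below, `W₁ + Z₁ < 0`. -/
theorem stmt8 : ∃ ε : ℝ, 0 < ε ∧ ∀ r : ℝ, rstar - ε < r → r < rstar → W1 r + Z1 r < 0 := by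
  have h2 : Real.sqrt 2 ^ 2 = 2 := Real.sq_sqrt (by norm_num)
  have h2p : 0 < Real.sqrt 2 := Real.sqrt_pos.mpr (by norm_num)
  have hrs : rstar = 5 * (Real.sqrt 2 - 1) := by
    unfold rstar
    rw [div_eq_iff (by positivity)]
    nlinarith
  have hlo : 1.4 < Real.sqrt 2 := Real.lt_sqrt_of_sq_lt (by norm_num)
  have hhi : Real.sqrt 2 < 1.415 := (Real.sqrt_lt' (by norm_num)).mpr (by norm_num)
  refine ⟨1 / 2, by norm_num, fun r hr1 hr2 => ?_⟩
  rw [hrs] at hr1 hr2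
  have r1 : 1 < r := by linarith
  have r2 : r < 2.08 := by linarith
  have hq : r ^ 2 + 10 * r - 25 < 0 := by nlinarith
  have hS : 0 < r ^ 2 - 44 * r + 92 := by nlinarith
  have hRsq : R1 r ^ 2 = r ^ 2 - 44 * r + 92 := Real.sq_sqrt hS.le
  have hRp : 0 < R1 r := Real.sqrt_pos.mpr hS
  have hZ : Real.sqrt 2 * R2 r = 7 * Real.sqrt (14 * (r * (r * (r * (79 * r - 79 * R1 r - 2906)
      + 2 * (584 * R1 r + 6733)) - 24 * (107 * R1 r + 1062)) + 2704 * R1 r + 23424)) := by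
    unfold R2
    rw [Real.sqrt_mul (by norm_num : (0:ℝ) ≤ 14), show (14:ℝ) = 2 * 7 by norm_num,
      Real.sqrt_mul (by norm_num : (0:ℝ) ≤ 2)]
    ring
  unfold W1 Z1
  rw [hZ]
  generalize R1 r = R at *
  have hb : 0 < 6 * r ^ 2 + 128 * r - 85 := by nlinarith
  have hg : 6 * r ^ 3 - 4 * r ^ 2 + 725 * r - 1070 < (6 * r ^ 2 + 128 * r - 85) * R := by
    refine lt_of_pow_lt_pow_left₀ 2 (by positivity) ?_
    have e : ((6 * r ^ 2 + 128 * r - 85) * R) ^ 2 - (6 * r ^ 3 - 4 * r ^ 2 + 725 * r - 1070) ^ 2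
        = 19208 * (-(r ^ 2 + 10 * r - 25)) * (r - 1) * (3 * r + 1) := by
      rw [mul_pow, hRsq]; ring
    have : 0 < 19208 * (-(r ^ 2 + 10 * r - 25)) * (r - 1) * (3 * r + 1) := by
      have h1 : 0 < -(r ^ 2 + 10 * r - 25) := by linarith
      have h3 : 0 < r - 1 := by linarith
      positivity
    linarith
  have hA : 280 * (r - 1) + (R + 8 - r) * (64 - 29 * r) < Real.sqrt (14 * (r * (r * (r * (79 * r -
      79 * R - 2906) + 2 * (584 * R + 6733)) - 24 * (107 * R + 1062)) + 2704 * R + 23424)) := by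
    apply Real.lt_sqrt_of_sq_lt
    have h3 : 0 < (r - 1) * ((6 * r ^ 2 + 128 * r - 85) * R
        - (6 * r ^ 3 - 4 * r ^ 2 + 725 * r - 1070)) :=
      mul_pos (by linarith) (by linarith)
    linear_combination 96 * h3 + (64 - 29 * r) ^ 2 * hRsq
  generalize Real.sqrt (14 * _) = T at *
  have hD : 0 < R + 8 - r := by linarith
  have e : 20 * (r - 1) / (-r + R + 8) - (2 / 7) * (2 * r + 5) +
      (1 / 147) * ((980 * r + 7 * T - 980) / (r - R - 8) + 7 * (94 - 17 * r))
      = (280 * (r - 1) + (R + 8 - r) * (64 - 29 * r) - T) / (21 * (R + 8 - r)) := by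
    rw [show r - R - 8 = -(R + 8 - r) by ring, show -r + R + 8 = R + 8 - r by ring]
    have := hD.ne'
    generalize hd : R + 8 - r = D at *
    rw [div_neg]
    field_simp
    ring
  rw [e]
  exact div_neg_of_neg_of_pos (by linarith) (by linarith)
end
end

section
/- Define r* = 10/(2 + 2√2) = 5(√2 − 1), and for real r set ℛ₁ = √(r² − 44r + 92), W₀ = (−3r + 3ℛ₁ + 10)/14, Z₀ = (r − ℛ₁ − 22)/14, and N_W(W,Z) = −rW − (13/8)W² − (1/4)WZ + (7/8)Z². Then there exists ε > 0 such that for every r with r* − ε < r < r*: N_W(W₀, Z₀) < 0. Equivalently, (2r+5)·ℛ₁ > 2r² + 59r − 110 for such r. -/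
noncomputable section

/-- `W₀`, the `W`-coordinate of the sonic point `P_s`. -/
def W0 (r : ℝ) : ℝ := (-3 * r + 3 * R1 r + 10) / 14

/-- `Z₀`, the `Z`-coordinate of the sonic point `P_s`. -/
def Z0 (r : ℝ) : ℝ := (r - R1 r - 22) / 14

/-- `N_W(W,Z) = −rW − (13/8)W² − (1/4)WZ + (7/8)Z²`. -/
def NW (r W Z : ℝ) : ℝ := -r * W - (13 / 8) * W ^ 2 - (1 / 4) * W * Z + (7 / 8) * Z ^ 2

/-- for `r` sufficiently close to `r*` from below, `N_W(P_s) < 0`;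
equivalently `(2r+5)ℛ₁ > 2r² + 59r − 110`. -/
theorem stmt9 : ∃ ε : ℝ, 0 < ε ∧ ∀ r : ℝ, rstar - ε < r → r < rstar →
    NW r (W0 r) (Z0 r) < 0 ∧ 2 * r ^ 2 + 59 * r - 110 < (2 * r + 5) * R1 r := by
  have h2 : Real.sqrt 2 ^ 2 = 2 := Real.sq_sqrt (by norm_num)
  have h0 : 0 ≤ Real.sqrt 2 := Real.sqrt_nonneg 2
  have hl : 1.414 < Real.sqrt 2 := Real.lt_sqrt_of_sq_lt (by norm_num)
  have hu : Real.sqrt 2 < 1.415 := by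
    rw [Real.sqrt_lt' (by norm_num)]; norm_num
  have hs : rstar = 5 * (Real.sqrt 2 - 1) := by
    unfold rstar
    rw [div_eq_iff (by positivity)]
    nlinarith
  refine ⟨1, one_pos, fun r h1 h3 => ?_⟩
  rw [hs] at h1 h3
  have hr1 : 1 < r := by linarith
  have hr2 : r < 2.075 := by linarith
  have hq : r ^ 2 + 10 * r - 25 < 0 := by nlinarith
  have hd : 0 ≤ r ^ 2 - 44 * r + 92 := by nlinarith
  have hR : R1 r ^ 2 = r ^ 2 - 44 * r + 92 := Real.sq_sqrt hd
  have hR0 : 0 ≤ R1 r := Real.sqrt_nonneg _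
  have key : 2 * r ^ 2 + 59 * r - 110 < (2 * r + 5) * R1 r := by
    apply lt_of_pow_lt_pow_left₀ 2 (by positivity)
    rw [mul_pow, hR]
    have := mul_pos (sub_pos.2 hr1) (neg_pos.2 hq)
    nlinarith
  refine ⟨?_, key⟩
  have e : NW r (W0 r) (Z0 r) =
      (2 / 49) * ((2 * r ^ 2 + 59 * r - 110) - (2 * r + 5) * R1 r) := by
    unfold NW W0 Z0
    linear_combination (-(13/8) * 9 / 196 + (1/4) * 3 / 196 + (7/8) / 196) * hR
  rw [e]
  linarith
end
end

section
/- Let r > 0 be a real number and define P_⋆ = ( (2√2 − 1)r/5, −(1 + 2√2)r/5 ). Then a point (W,Z) ∈ ℝ² with W > Z satisfies N_W(W,Z) = 0 and N_Z(W,Z) = 0 if and only if (W,Z) = P_⋆. -/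
noncomputable section

/-- `N_Z(W,Z) = −rZ + (7/8)W² − (1/4)WZ − (13/8)Z²`. -/
def NZ (r W Z : ℝ) : ℝ := -r * Z + (7 / 8) * W ^ 2 - (1 / 4) * W * Z - (13 / 8) * Z ^ 2

/-- The point `P_⋆ = ((2√2 − 1)r/5, −(1 + 2√2)r/5)`. -/
def Pstar (r : ℝ) : ℝ × ℝ :=
  ((2 * Real.sqrt 2 - 1) * r / 5, -(1 + 2 * Real.sqrt 2) * r / 5)

/-- for `r > 0`, the unique simultaneous zero of `N_W` and `N_Z` in the open
half-plane `W > Z` is `P_⋆`. -/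
theorem stmt11 (r : ℝ) (hr : 0 < r) (W Z : ℝ) (hWZ : Z < W) :
    (NW r W Z = 0 ∧ NZ r W Z = 0) ↔ (W, Z) = Pstar r := by
  have h2 : Real.sqrt 2 ^ 2 = 2 := Real.sq_sqrt (by norm_num)
  have hpos : 0 < Real.sqrt 2 := Real.sqrt_pos.mpr (by norm_num)
  simp only [NW, NZ, Pstar, Prod.mk.injEq]
  constructor
  · rintro ⟨h, k⟩
    have hD : W - Z ≠ 0 := (sub_pos.mpr hWZ).ne'
    have hS : W + Z + 2 * r / 5 = 0 := by
      have : (W - Z) * (W + Z + 2 * r / 5) = 0 := by linear_combination (-2 / 5) * (h - k)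
      exact (mul_eq_zero.mp this).resolve_left hD
    have hZ : Z = -W - 2 * r / 5 := by linarith
    have hD2 : (W - Z) ^ 2 = (4 * Real.sqrt 2 * r / 5) ^ 2 := by
      subst hZ
      linear_combination (-4) * (h + k) - 16 * r ^ 2 / 25 * h2
    have hE : W - Z = 4 * Real.sqrt 2 * r / 5 :=
      (sq_eq_sq₀ (sub_pos.mpr hWZ).le (by positivity)).mp hD2
    constructor <;> linarith
  · rintro ⟨rfl, rfl⟩
    constructor <;> linear_combination (-2 * r ^ 2 / 25) * h2
end
end
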